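/- Let G be a finite group and A a noncyclic abelian group acting on G with (|A|,|G|)=1. Then G is generated by the fixed-point subgroups C_G(B), where B ranges over the subgroups of A such that A/B is cyclic. -/

import Mathlib

/-!
An element `g` is fixed by some `B` with `A ⧸ B` cyclic exactly when `A ⧸ stabilizer A g` is
cyclic.

If `A` is a `p`-group and `p ∤ |G|`, counting fixed points modulo `p` shows that fixed points of
subgroups of `A` lift from quotients of `G`, and that `A` normalizes a Sylow subgroup for every
prime. A minimal counterexample `G` is therefore abelian with no proper nontrivial `A`-invariant
subgroup, so Schur's lemma embeds `A ⧸ stabilizer A g` into the unit group of a field.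

For general `A`, take the `p`-subgroups `P` of `A` with `p ∤ |G|` one at a time. Since `A` is
abelian, the fixed-point subgroup of `stabilizer A g` in `G` is `A`-invariant, and applying the
first case to `P` acting on it writes `g` as a product of elements `k` with `P ⧸ stabilizer P k`
cyclic, while `stabilizer A k` still contains `stabilizer A g`, so that nothing is lost for the
earlier subgroups. Finally, `A ⧸ stabilizer A g` is cyclic as soon as its Sylow subgroups are.
-/

open MulAction Subgroup

section Cyclic

variable {A : Type*} [CommGroup A]

theorem isCyclic_quotient_of_le {B C : Subgroup A} (h : B ≤ C) [IsCyclic (A ⧸ B)] :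
    IsCyclic (A ⧸ C) :=
  isCyclic_of_surjective (QuotientGroup.map B C (MonoidHom.id A) h)
    (QuotientGroup.map_surjective_of_surjective _ _ _ (QuotientGroup.mk_surjective) h)

theorem isCyclic_quotient_of_forall_sylow [Finite A] {B : Subgroup A}
    (h : ∀ p : ℕ, p.Prime → ∀ P : Sylow p A, IsCyclic (P ⧸ B.subgroupOf P)) :
    IsCyclic (A ⧸ B) := by
  have : IsZGroup (A ⧸ B) := by
    refine ⟨fun p hp Q => ?_⟩
    have : Fact p.Prime := ⟨hp⟩
    obtain ⟨P, rfl⟩ := Sylow.mapSurjective_surjective (QuotientGroup.mk'_surjective B) p Q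
    have hker : B.subgroupOf P ≤ ((QuotientGroup.mk' B).subgroupMap P).ker := fun x hx =>
      Subtype.ext ((QuotientGroup.eq_one_iff (x : A)).2 hx)
    have := h p hp P
    exact isCyclic_of_surjective (QuotientGroup.lift _ _ hker)
      (QuotientGroup.lift_surjective_of_surjective _ _
        ((QuotientGroup.mk' B).subgroupMap_surjective P) hker)
  exact IsCyclic.of_exponent_eq_card (IsZGroup.exponent_eq_card _)

/-- The annihilator of `x` is a maximal ideal `I`, and `A ⧸ B` embeds into the field `R ⧸ I`. -/
theorem isCyclic_quotient_of_isSimpleModule {R M : Type*} [CommRing R] [AddCommGroup M]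
    [Module R M] [IsSimpleModule R M] (f : A →* R) {x : M} (hx : x ≠ 0) {B : Subgroup A}
    [Finite (A ⧸ B)] (hB : ∀ a, f a • x = x ↔ a ∈ B) : IsCyclic (A ⧸ B) := by
  let I : Ideal R := LinearMap.ker (LinearMap.toSpanSingleton R M x)
  have : I.IsMaximal := IsSimpleModule.ker_toSpanSingleton_isMaximal R hx
  let F : A →* (R ⧸ I)ˣ := ((Ideal.Quotient.mk I : R →* R ⧸ I).comp f).toHomUnits
  obtain rfl : F.ker = B := by
    ext a
    have hF : F a = 1 ↔ f a - 1 ∈ I := Units.ext_iff.trans Ideal.Quotient.eq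
    rw [MonoidHom.mem_ker, hF, ← hB, LinearMap.mem_ker, LinearMap.toSpanSingleton_apply,
      sub_smul, one_smul, sub_eq_zero]
  exact isCyclic_of_injective_ringHom ((Units.coeHom (R ⧸ I)).comp (QuotientGroup.kerLift F))
    (Units.val_injective.comp (QuotientGroup.kerLift_injective F))

end Cyclic

section Invariant

/-- A subgroup `H` of `G` is invariant if the action of `A` on `G` maps it into itself, so that
`A` acts on `H` and, when `H` is normal, on `G ⧸ H`. -/
def IsActionInvariant (A : Type*) {G : Type*} [Monoid A] [Group G] [MulDistribMulAction A G]
    (H : Subgroup G) : Prop :=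
  ∀ a : A, ∀ h ∈ H, a • h ∈ H

variable {A G : Type*} [Group G]

namespace IsActionInvariant

/-- The restriction of the action of `A` on `G` to an invariant subgroup. -/
abbrev subgroupAction [Monoid A] [MulDistribMulAction A G] {H : Subgroup G}
    (hH : IsActionInvariant A H) : MulDistribMulAction A H where
  smul a h := ⟨a • (h : G), hH a h h.2⟩
  one_smul h := Subtype.ext (one_smul A (h : G))
  mul_smul a b h := Subtype.ext (mul_smul a b (h : G))
  smul_one a := Subtype.ext (smul_one a)
  smul_mul a g h := Subtype.ext (smul_mul' a (g : G) (h : G))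

/-- The action induced on the quotient of `G` by an invariant normal subgroup. -/
abbrev quotientAction [Monoid A] [MulDistribMulAction A G] {N : Subgroup G} [N.Normal]
    (hN : IsActionInvariant A N) : MulDistribMulAction A (G ⧸ N) where
  smul a := QuotientGroup.map N N (MulDistribMulAction.toMonoidHom G a) (hN a)
  one_smul := QuotientGroup.mk_surjective.forall.2 fun g =>
    congrArg QuotientGroup.mk (one_smul A g)
  mul_smul a b := QuotientGroup.mk_surjective.forall.2 fun g =>
    congrArg QuotientGroup.mk (mul_smul a b g)
  smul_one _ := map_one _
  smul_mul _ := map_mul _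

theorem center [Group A] [MulDistribMulAction A G] : IsActionInvariant A (center G) := fun a z hz =>
  mem_center_iff.2 fun g => by
    simpa only [smul_mul', smul_inv_smul] using congrArg (a • ·) (mem_center_iff.1 hz (a⁻¹ • g))

theorem fixedPoints [CommGroup A] [MulDistribMulAction A G] (B : Subgroup A) :
    IsActionInvariant A (FixedPoints.subgroup B G) := fun a g hg b => by
  rw [smul_comm, hg b]

end IsActionInvariant

end Invariant

section PGroup

variable {p : ℕ} [Fact p.Prime] {A G : Type*} [Group A] [Group G] [MulDistribMulAction A G]

theorem exists_isActionInvariant_sylow [Finite G] (hA : IsPGroup p A) (hG : ¬ p ∣ Nat.card G)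
    (q : ℕ) [Fact q.Prime] : ∃ Q : Sylow q G, IsActionInvariant A (Q : Subgroup G) := by
  have hcard (Q : Sylow q G) : Nat.card (Sylow q G) ∣ Nat.card G :=
    Q.card_dvd_index.trans (index_dvd_card _)
  obtain ⟨Q, hQ⟩ := hA.nonempty_fixed_point_of_prime_not_dvd_card (Sylow q G)
    fun h => hG (h.trans (hcard default))
  refine ⟨Q, fun a g hg => ?_⟩
  have := Subgroup.smul_mem_pointwise_smul g a (Q : Subgroup G) hg
  rwa [← Sylow.pointwise_smul_def, hQ a] at this

theorem exists_map_eq_stabilizer_le {Q : Type*} [Group Q] [MulDistribMulAction A Q]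
    {f : G →* Q} (hf : ∀ (a : A) g, f (a • g) = a • f g) (hsurj : Function.Surjective f)
    (hA : IsPGroup p A) (hker : ¬ p ∣ Nat.card f.ker) (x : Q) :
    ∃ g, f g = x ∧ stabilizer A x ≤ stabilizer A g := by
  let fiber : SubMulAction (stabilizer A x) G :=
    { carrier := f ⁻¹' {x}
      smul_mem' := fun a g (hg : f g = x) => ((hf a g).trans (congrArg _ hg)).trans a.2 }
  have hcard : Nat.card fiber = Nat.card f.ker :=
    Nat.card_congr (f.fiberEquivKerOfSurjective hsurj x)
  obtain ⟨g, hg⟩ := (hA.to_subgroup (stabilizer A x)).nonempty_fixed_point_of_prime_not_dvd_card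
    fiber (hcard ▸ hker)
  exact ⟨g, g.2, fun a ha => congrArg Subtype.val (hg ⟨a, ha⟩)⟩

end PGroup

theorem eq_top_of_forall_exists_sylow_le {G : Type*} [Group G] [Finite G] {K : Subgroup G}
    (h : ∀ p : ℕ, p.Prime → ∃ P : Sylow p G, P ≤ K) : K = ⊤ := by
  by_contra hK
  obtain ⟨p, hp, hdvd⟩ := Nat.exists_prime_and_dvd (mt index_eq_one.1 hK)
  have : Fact p.Prime := ⟨hp⟩
  obtain ⟨P, hP⟩ := h p hp
  exact P.not_dvd_index (hdvd.trans (index_dvd_of_le hP))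

section Cocyclic

variable {A G : Type*} [CommGroup A] [Group G] [MulDistribMulAction A G]

/-- The elements of `G` lying in `C_G(B)` for some `B ≤ A` with `A ⧸ B` cyclic; the largest
candidate for `B` is the stabilizer, see `mem_cocyclicElements_iff`. -/
def cocyclicElements (A G : Type*) [CommGroup A] [Group G] [MulDistribMulAction A G] : Set G :=
  {g | IsCyclic (A ⧸ stabilizer A g)}

theorem mem_cocyclicElements_iff {g : G} : g ∈ cocyclicElements A G ↔
    ∃ B : Subgroup A, IsCyclic (A ⧸ B) ∧ ∀ b ∈ B, b • g = g :=
  ⟨fun hg => ⟨stabilizer A g, hg, fun _ hb => hb⟩, fun ⟨_, _, hB⟩ => isCyclic_quotient_of_le hB⟩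

theorem one_mem_cocyclicElements : (1 : G) ∈ cocyclicElements A G :=
  have : Subsingleton (A ⧸ (⊤ : Subgroup A)) := QuotientGroup.subsingleton_quotient_top
  mem_cocyclicElements_iff.2 ⟨⊤, isCyclic_of_subsingleton, fun b _ => smul_one b⟩

theorem cocyclicElements_of_stabilizer_le {K : Type*} [Group K] [MulDistribMulAction A K]
    {g : G} {k : K} (hg : g ∈ cocyclicElements A G) (h : stabilizer A g ≤ stabilizer A k) :
    k ∈ cocyclicElements A K :=
  have : IsCyclic (A ⧸ stabilizer A g) := hg
  isCyclic_quotient_of_le h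

theorem IsActionInvariant.closure_inter_cocyclicElements {H : Subgroup G}
    (hH : IsActionInvariant A H)
    (h : letI := hH.subgroupAction; closure (cocyclicElements A H) = ⊤) :
    closure (H ∩ cocyclicElements A G) = H := by
  let := hH.subgroupAction
  refine le_antisymm ((closure_le H).2 Set.inter_subset_left) ?_
  calc H = (closure (cocyclicElements A H)).map H.subtype := by
        rw [h, ← MonoidHom.range_eq_map, range_subtype]
    _ = closure (H.subtype '' cocyclicElements A H) := MonoidHom.map_closure _ _
    _ ≤ closure (H ∩ cocyclicElements A G) := closure_mono <| by
        rintro _ ⟨k, hk, rfl⟩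
        exact ⟨k.2, cocyclicElements_of_stabilizer_le hk fun a ha => congrArg Subtype.val ha⟩

theorem closure_cocyclicElements_eq_top_of_surjective {p : ℕ} [Fact p.Prime] {Q : Type*}
    [Group Q] [MulDistribMulAction A Q] {f : G →* Q} (hf : ∀ (a : A) g, f (a • g) = a • f g)
    (hsurj : Function.Surjective f) (hA : IsPGroup p A) (hp : ¬ p ∣ Nat.card f.ker)
    (hker : f.ker ≤ closure (cocyclicElements A G))
    (hQ : closure (cocyclicElements A Q) = ⊤) : closure (cocyclicElements A G) = ⊤ := by
  have hlift : cocyclicElements A Q ⊆ f '' cocyclicElements A G := fun x hx =>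
    have ⟨g, hgx, hg⟩ := exists_map_eq_stabilizer_le hf hsurj hA hp x
    ⟨g, cocyclicElements_of_stabilizer_le hx hg, hgx⟩
  have hmap : (closure (cocyclicElements A G)).map f = ⊤ := by
    rw [MonoidHom.map_closure, eq_top_iff, ← hQ]
    exact closure_mono hlift
  rw [← sup_eq_left.2 hker, ← comap_map_eq, hmap, comap_top]

end Cocyclic

section Irreducible

open scoped MonoidAlgebra

variable {A G : Type*} [CommGroup A] [CommGroup G] [MulDistribMulAction A G]

theorem isSimpleModule_asModule_ofMulDistribMulAction [Nontrivial G]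
    (hirr : ∀ H : Subgroup G, IsActionInvariant A H → H = ⊥ ∨ H = ⊤) :
    IsSimpleModule ℤ[A] (Representation.ofMulDistribMulAction A G).asModule := by
  rw [isSimpleModule_iff,
    ← Subrepresentation.subrepresentationSubmoduleOrderIso.isSimpleOrder_iff]
  refine { exists_pair_ne := ⟨⊥, ⊤, fun h => ?_⟩, eq_bot_or_eq_top := fun S => ?_ }
  · exact bot_ne_top (congrArg Subrepresentation.toSubmodule h)
  · let H : Subgroup G := S.toSubmodule.toAddSubgroup.toSubgroup'
    refine (hirr H fun a g hg => S.apply_mem_toSubmodule a hg).imp (fun h => ?_) fun h => ?_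
    · exact SetLike.ext fun g => SetLike.ext_iff.1 h g.toMul
    · exact SetLike.ext fun g => SetLike.ext_iff.1 h g.toMul

theorem cocyclicElements_eq_univ_of_irreducible [Finite G]
    (hirr : ∀ H : Subgroup G, IsActionInvariant A H → H = ⊥ ∨ H = ⊤) :
    cocyclicElements A G = Set.univ := by
  refine Set.eq_univ_of_forall fun g => ?_
  by_cases hg : g = 1
  · exact hg ▸ one_mem_cocyclicElements
  have : Nontrivial G := ⟨g, 1, hg⟩
  let ρ := Representation.ofMulDistribMulAction A G
  have : IsSimpleModule ℤ[A] ρ.asModule := isSimpleModule_asModule_ofMulDistribMulAction hirr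
  have : Finite (A ⧸ stabilizer A g) := Finite.of_equiv _ (orbitEquivQuotientStabilizer A g)
  let x : ρ.asModule := ρ.asModuleEquiv.symm (Additive.ofMul g)
  have hx : x ≠ 0 := (LinearEquiv.map_ne_zero_iff _).2 hg
  refine isCyclic_quotient_of_isSimpleModule (MonoidAlgebra.of ℤ A) hx fun a => ?_
  rw [← Representation.asModuleEquiv_symm_map_rho]
  exact (LinearEquiv.injective _).eq_iff

end Irreducible

theorem exists_isPGroup_of_forall_isActionInvariant_le {p : ℕ} [Fact p.Prime] {A G : Type*}
    [Group A] [Group G] [Finite G] [MulDistribMulAction A G] (hA : IsPGroup p A)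
    (hG : ¬ p ∣ Nat.card G) {K : Subgroup G} (hK : K ≠ ⊤)
    (hle : ∀ H : Subgroup G, IsActionInvariant A H → H ≠ ⊤ → H ≤ K) :
    ∃ q : ℕ, q.Prime ∧ IsPGroup q G := by
  contrapose! hK
  refine eq_top_of_forall_exists_sylow_le fun q hq => ?_
  have : Fact q.Prime := ⟨hq⟩
  obtain ⟨Q, hQ⟩ := exists_isActionInvariant_sylow hA hG q
  refine ⟨Q, hle Q hQ fun hQT => hK q hq ?_⟩
  exact (hQT ▸ Q.isPGroup').of_equiv topEquiv

theorem closure_cocyclicElements_eq_top_of_isPGroup {p : ℕ} [Fact p.Prime] {A : Type*}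
    [CommGroup A] (hA : IsPGroup p A) {G : Type*} [Group G] [Finite G] [MulDistribMulAction A G]
    (hG : ¬ p ∣ Nat.card G) : closure (cocyclicElements A G) = ⊤ := by
  induction hn : Nat.card G using Nat.strong_induction_on generalizing G with | _ n ih
  subst hn
  by_contra hT
  have proper_le (H : Subgroup G) (hH : IsActionInvariant A H) (hHT : H ≠ ⊤) :
      H ≤ closure (cocyclicElements A G) := by
    let := hH.subgroupAction
    have hcard : Nat.card H < Nat.card G :=
      H.card_le_card_group.lt_of_ne (mt H.eq_top_of_card_eq hHT)
    have hgen := ih _ hcard (fun h => hG (h.trans H.card_subgroup_dvd_card)) rfl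
    exact (hH.closure_inter_cocyclicElements hgen).ge.trans (closure_mono Set.inter_subset_right)
  have eq_bot_or_eq_top (N : Subgroup G) (hN : IsActionInvariant A N) (_ : N.Normal) :
      N = ⊥ ∨ N = ⊤ := by
    by_contra! hne
    let := hN.quotientAction
    have hcard : Nat.card (G ⧸ N) < Nat.card G := by
      rw [N.card_eq_card_quotient_mul_card_subgroup]
      exact lt_mul_of_one_lt_right Nat.card_pos (N.one_lt_card_iff_ne_bot.2 hne.1)
    have hgen := ih _ hcard (fun h => hG (h.trans N.card_quotient_dvd_card)) rfl
    refine hT (closure_cocyclicElements_eq_top_of_surjective (f := QuotientGroup.mk' N)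
      (fun _ _ => rfl) (QuotientGroup.mk'_surjective N) hA ?_ ?_ hgen)
    all_goals rw [QuotientGroup.ker_mk']
    · exact fun h => hG (h.trans N.card_subgroup_dvd_card)
    · exact proper_le N hN hne.2
  obtain ⟨q, hq, hqG⟩ := exists_isPGroup_of_forall_isActionInvariant_le hA hG hT proper_le
  have : Fact q.Prime := ⟨hq⟩
  have : Nontrivial G := not_subsingleton_iff_nontrivial.1 fun _ => hT (Subsingleton.elim _ _)
  have hcenter : center G = ⊤ :=
    (eq_bot_or_eq_top _ .center inferInstance).resolve_left hqG.bot_lt_center.ne'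
  let : CommGroup G := Group.commGroupOfCenterEqTop hcenter
  have huniv := cocyclicElements_eq_univ_of_irreducible (A := A) (G := G)
    fun H hH => eq_bot_or_eq_top H hH inferInstance
  exact hT (huniv ▸ closure_univ)

theorem closure_iInter_cocyclicElements {A G : Type*} [CommGroup A] [Group G] [Finite G]
    [MulDistribMulAction A G] {S : Set (Subgroup A)} (hfin : S.Finite)
    (hS : ∀ P ∈ S, ∃ p : ℕ, p.Prime ∧ IsPGroup p P ∧ ¬ p ∣ Nat.card G) :
    closure (⋂ P ∈ S, cocyclicElements P G) = ⊤ := by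
  induction S, hfin using Set.Finite.induction_on with
  | empty => simp
  | @insert P S _ _ ih =>
    rw [Set.forall_mem_insert] at hS
    obtain ⟨⟨p, hp, hP, hpG⟩, hS⟩ := hS
    have : Fact p.Prime := ⟨hp⟩
    rw [eq_top_iff, ← ih hS, closure_le, Set.biInter_insert]
    intro g hg
    let C : Subgroup G := FixedPoints.subgroup (stabilizer A g) G
    have hC : IsActionInvariant P C := fun a => IsActionInvariant.fixedPoints _ (a : A)
    have hgen : closure (C ∩ cocyclicElements P G) = C := by
      let := hC.subgroupAction
      exact hC.closure_inter_cocyclicElements <| closure_cocyclicElements_eq_top_of_isPGroup hP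
        fun h => hpG (h.trans C.card_subgroup_dvd_card)
    have hgC : g ∈ C := fun a => a.2
    rw [← hgen] at hgC
    refine closure_mono ?_ hgC
    rintro k ⟨hkC, hkP⟩
    refine ⟨hkP, Set.mem_iInter₂.2 fun Q hQ => ?_⟩
    exact cocyclicElements_of_stabilizer_le (Set.mem_iInter₂.1 hg Q hQ)
      fun a ha => hkC ⟨(a : A), ha⟩

theorem closure_cocyclicElements_eq_top {A G : Type*} [CommGroup A] [Finite A] [Group G]
    [Finite G] [MulDistribMulAction A G] (hcop : (Nat.card A).Coprime (Nat.card G)) :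
    closure (cocyclicElements A G) = ⊤ := by
  let S : Set (Subgroup A) := {P | ∃ p : ℕ, p.Prime ∧ IsPGroup p P ∧ ¬ p ∣ Nat.card G}
  rw [eq_top_iff, ← closure_iInter_cocyclicElements S.toFinite fun _ hP => hP]
  refine closure_mono fun g hg => isCyclic_quotient_of_forall_sylow fun p hp P => ?_
  have : Fact p.Prime := ⟨hp⟩
  rcases P.isPGroup'.card_eq_or_dvd with hcard | hdvd
  · have : Subsingleton P := (Nat.card_eq_one_iff_unique.1 hcard).1
    exact isCyclic_of_subsingleton
  · have hpG : ¬ p ∣ Nat.card G := fun h => hp.not_dvd_one <|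
      hcop ▸ Nat.dvd_gcd (hdvd.trans (card_subgroup_dvd_card _)) h
    exact Set.mem_iInter₂.1 hg P ⟨p, hp, P.isPGroup', hpG⟩

theorem coprime_noncyclic_abelian_generation_general
    {G A : Type*} [Group G] [Finite G] [CommGroup A] [Finite A]
    (φ : A →* MulAut G)
    (hcop : Nat.Coprime (Nat.card A) (Nat.card G)) :
    Subgroup.closure {g : G | ∃ B : Subgroup A, IsCyclic (A ⧸ B) ∧ ∀ b ∈ B, φ b g = g} = ⊤ := by
  let : MulDistribMulAction A G := MulDistribMulAction.compHom G φ
  have hset : {g : G | ∃ B : Subgroup A, IsCyclic (A ⧸ B) ∧ ∀ b ∈ B, φ b g = g} =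
      cocyclicElements A G := Set.ext fun _ => mem_cocyclicElements_iff.symm
  rw [hset, closure_cocyclicElements_eq_top hcop]

/-- If a noncyclic abelian group `A` acts coprimely on a finite group `G`,
then `G` is generated by the fixed-point subgroups `C_G(B)` where `A/B` is cyclic. -/
theorem coprime_noncyclic_abelian_generation
    (G A : Type) [Group G] [Finite G] [CommGroup A] [Finite A]
    (hA : ¬ IsCyclic A)
    (φ : A →* MulAut G)
    (hcop : Nat.Coprime (Nat.card A) (Nat.card G)) :
    Subgroup.closure {g : G | ∃ B : Subgroup A, IsCyclic (A ⧸ B) ∧ ∀ b ∈ B, φ b g = g} = ⊤ :=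
  coprime_noncyclic_abelian_generation_general φ hcop
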